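/- arXiv:2207.12343 — 6 statements merged into one kernel-verified Lean document; each statement's English description precedes it below -/
import Mathlib

section
/- Let a ∈ ℝ, β > 0, T > 0, let g : [0,T] → (0,∞) be continuous, and let E : [0,T] → ℝ be differentiable with E(0) > 0 and E′(t) ≥ a·E(t) + 2^(−β)·g(t)·E(t)^(1+β) for all t ∈ [0,T]. Then 2^(−β)·β·∫₀ᵀ g(s)·e^(βas) ds < E(0)^(−β); equivalently, T is strictly smaller than the first time t at which ∫₀ᵗ g(s)·e^(βas) ds ≥ 2^β·β^(−1)·E(0)^(−β). -/
/-- Pathwise content of Case 1 of Theorem 4.1: if a positive quantity `E`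
satisfies `E' ≥ a·E + 2^(-β)·g·E^(1+β)` on `[0,T]`, then
`2^(-β)·β·∫₀ᵀ g(s)·e^(βas) ds < E(0)^(-β)`, i.e. `T` is strictly smaller than
the first time the exponential functional reaches `2^β·β⁻¹·E(0)^(-β)`. -/
theorem stmt3 (a β T : ℝ) (hβ : 0 < β) (hT : 0 < T)
    (g E E' : ℝ → ℝ)
    (hg : ContinuousOn g (Set.Icc 0 T))
    (hgpos : ∀ t ∈ Set.Icc (0:ℝ) T, 0 < g t)
    (hE0 : 0 < E 0)
    (hE : ∀ t ∈ Set.Icc (0:ℝ) T, HasDerivWithinAt E (E' t) (Set.Icc 0 T) t)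
    (hineq : ∀ t ∈ Set.Icc (0:ℝ) T,
      a * E t + (2:ℝ) ^ (-β) * g t * E t ^ (1 + β) ≤ E' t) :
    (2:ℝ) ^ (-β) * β * ∫ s in (0:ℝ)..T, g s * Real.exp (β * a * s)
      < E 0 ^ (-β) := by
  have hc : (0:ℝ) < (2:ℝ) ^ (-β) := Real.rpow_pos_of_pos (by norm_num) _
  have hE2 : ∀ t ∈ Set.Ico (0:ℝ) T, HasDerivWithinAt E (E' t) (Set.Ici t) t := by
    intro t ht
    refine (hE t ⟨ht.1, ht.2.le⟩).mono_of_mem_nhdsWithin ?_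
    exact Filter.mem_of_superset (Icc_mem_nhdsGE ht.2) (Set.Icc_subset_Icc_left ht.1)
  have hEc : ContinuousOn E (Set.Icc 0 T) := fun t ht => (hE t ht).continuousWithinAt
  set F : ℝ → ℝ := fun t => E t * Real.exp (-a * t) with hF
  have hFc : ContinuousOn F (Set.Icc 0 T) :=
    hEc.mul (Continuous.continuousOn (by fun_prop))
  have hFd : ∀ t ∈ Set.Ico (0:ℝ) T, HasDerivWithinAt F
      ((E' t - a * E t) * Real.exp (-a * t)) (Set.Ici t) t := by
    intro t ht
    have h1 : HasDerivAt (fun t : ℝ => Real.exp (-a * t)) (Real.exp (-a * t) * (-a * 1)) t :=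
      ((hasDerivAt_id t).const_mul (-a)).exp
    refine ((hE2 t ht).mul h1.hasDerivWithinAt).congr_deriv ?_
    ring
  have hF0 : F 0 = E 0 := by simp [hF]
  have hpos' : ∀ t ∈ Set.Icc (0:ℝ) T, - F t ≤ - F 0 := by
    intro t ht
    refine image_le_of_deriv_right_lt_deriv_boundary' (f := fun t => - F t)
      (B := fun _ => - F 0) (B' := fun _ => 0) hFc.neg (fun x hx => (hFd x hx).neg) le_rfl
      continuousOn_const (fun x _ => hasDerivWithinAt_const _ _ _) ?_ ht
    intro x hx h
    have hx' : x ∈ Set.Icc (0:ℝ) T := ⟨hx.1, hx.2.le⟩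
    have hEx : 0 < E x := by
      have h2 : 0 < E x * Real.exp (-a * x) := by
        have : F x = F 0 := by linarith
        rw [hF0] at this
        rw [← this] at hE0
        exact hE0
      exact pos_of_mul_pos_left h2 (Real.exp_pos _).le
    have h3 := hineq x hx'
    have h4 : 0 < (2:ℝ) ^ (-β) * g x * E x ^ (1 + β) :=
      mul_pos (mul_pos hc (hgpos x hx')) (Real.rpow_pos_of_pos hEx _)
    have h5 : 0 < (E' x - a * E x) * Real.exp (-a * x) :=
      mul_pos (by linarith) (Real.exp_pos _)
    linarith
  have hFpos : ∀ t ∈ Set.Icc (0:ℝ) T, 0 < F t := by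
    intro t ht
    have := hpos' t ht
    linarith
  have hEpos : ∀ t ∈ Set.Icc (0:ℝ) T, 0 < E t := fun t ht =>
    pos_of_mul_pos_left (hFpos t ht) (Real.exp_pos _).le
  set G : ℝ → ℝ := Set.IccExtend hT.le (Set.domRestrict (Set.Icc 0 T) g) with hG
  have hGc : Continuous G := (continuousOn_iff_continuous_domRestrict.1 hg).Icc_extend'
  have hGg : ∀ t ∈ Set.Icc (0:ℝ) T, G t = g t := fun t ht => by
    rw [hG, Set.IccExtend_of_mem _ _ ht]; rfl
  set h : ℝ → ℝ := fun s => G s * Real.exp (β * a * s) with hh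
  have hhc : Continuous h := by fun_prop
  have hint : ∫ s in (0:ℝ)..T, g s * Real.exp (β * a * s) = ∫ s in (0:ℝ)..T, h s := by
    refine intervalIntegral.integral_congr fun s hs => ?_
    rw [Set.uIcc_of_le hT.le] at hs
    simp only [hh, hGg s hs]
  rw [hint]
  have hId : ∀ t, HasDerivAt (fun t => (2:ℝ) ^ (-β) * β * ∫ s in (0:ℝ)..t, h s)
      ((2:ℝ) ^ (-β) * β * h t) t := fun t =>
    (intervalIntegral.integral_hasDerivAt_right (hhc.intervalIntegrable _ _)
      (hhc.stronglyMeasurableAtFilter _ _) hhc.continuousAt).const_mul _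
  have key := image_le_of_deriv_right_le_deriv_boundary
    (f := fun t => (2:ℝ) ^ (-β) * β * ∫ s in (0:ℝ)..t, h s)
    (f' := fun t => (2:ℝ) ^ (-β) * β * h t) (a := 0) (b := T)
    (B := fun t => E 0 ^ (-β) - F t ^ (-β))
    (B' := fun t => - (((E' t - a * E t) * Real.exp (-a * t)) * (-β) * F t ^ (-β - 1)))
    (fun t _ => (hId t).continuousAt.continuousWithinAt)
    (fun t _ => (hId t).hasDerivWithinAt)
    (by simp [hF0])
    (continuousOn_const.sub (hFc.rpow_const fun t ht => Or.inl (hFpos t ht).ne'))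
    (fun t ht => ((hFd t ht).rpow_const
      (Or.inl (hFpos t ⟨ht.1, ht.2.le⟩).ne')).const_sub _)
    ?_ (Set.right_mem_Icc.2 hT.le)
  · have := Real.rpow_pos_of_pos (hFpos T (Set.right_mem_Icc.2 hT.le)) (-β)
    linarith
  · intro t ht
    have ht' : t ∈ Set.Icc (0:ℝ) T := ⟨ht.1, ht.2.le⟩
    have hEt := hEpos t ht'
    have e1 : F t ^ (-β - 1) = (E t ^ (1 + β))⁻¹ * Real.exp (a * t + β * a * t) := by
      simp only [hF]
      rw [Real.mul_rpow hEt.le (Real.exp_pos _).le, ← Real.exp_mul, ← Real.rpow_neg hEt.le]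
      congr 2 <;> ring
    have e2 : Real.exp (-a * t) * Real.exp (a * t + β * a * t) = Real.exp (β * a * t) := by
      rw [← Real.exp_add]; congr 1; ring
    have hp := Real.rpow_pos_of_pos hEt (1 + β)
    have h3 : (2:ℝ) ^ (-β) * g t ≤ (E' t - a * E t) * (E t ^ (1 + β))⁻¹ := by
      rw [← div_eq_mul_inv, le_div_iff₀ hp]
      linarith [hineq t ht']
    have e3 : - (((E' t - a * E t) * Real.exp (-a * t)) * (-β) * F t ^ (-β - 1))
        = (E' t - a * E t) * (E t ^ (1 + β))⁻¹ * (β * Real.exp (β * a * t)) := by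
      rw [e1, ← e2]; ring
    rw [e3]
    have h4 := mul_le_mul_of_nonneg_right h3
      (mul_pos hβ (Real.exp_pos (β * a * t))).le
    simp only [hh, hGg t ht']
    linarith
end

section
/- Let a ∈ ℝ, β₂ > 0, κ > 0, δ ≥ 0, T > 0, let g : [0,T] → (0,∞) be continuous, and let E : [0,T] → ℝ be differentiable with E(0) > 0, E(t) ≥ E(0) for all t ∈ [0,T], κ − δ·E(0)^(−(1+β₂)) > 0, and E′(t) ≥ a·E(t) + g(t)·(κ·E(t)^(1+β₂) − δ) for all t ∈ [0,T]. Then ∫₀ᵀ g(s)·e^(β₂as) ds < [ β₂·E(0)^(β₂)·(κ − δ·E(0)^(−(1+β₂))) ]^(−1). -/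
/-- Scalar pathwise reduction underlying Case 2 of Theorem 4.1: if `E ≥ E(0) > 0`
satisfies `E' ≥ a·E + g·(κ·E^(1+β₂) − δ)` on `[0,T]` with
`κ − δ·E(0)^(-(1+β₂)) > 0`, then
`∫₀ᵀ g(s)·e^(β₂as) ds < [β₂·E(0)^(β₂)·(κ − δ·E(0)^(-(1+β₂)))]⁻¹`. -/
theorem stmt6 (a β₂ κ δ T : ℝ) (hβ₂ : 0 < β₂) (hκ : 0 < κ) (hδ : 0 ≤ δ)
    (hT : 0 < T)
    (g E E' : ℝ → ℝ)
    (hg : ContinuousOn g (Set.Icc 0 T))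
    (hgpos : ∀ t ∈ Set.Icc (0:ℝ) T, 0 < g t)
    (hE0 : 0 < E 0)
    (hEmono : ∀ t ∈ Set.Icc (0:ℝ) T, E 0 ≤ E t)
    (hκδ : 0 < κ - δ * E 0 ^ (-(1 + β₂)))
    (hE : ∀ t ∈ Set.Icc (0:ℝ) T, HasDerivWithinAt E (E' t) (Set.Icc 0 T) t)
    (hineq : ∀ t ∈ Set.Icc (0:ℝ) T,
      a * E t + g t * (κ * E t ^ (1 + β₂) - δ) ≤ E' t) :
    ∫ s in (0:ℝ)..T, g s * Real.exp (β₂ * a * s)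
      < (β₂ * E 0 ^ β₂ * (κ - δ * E 0 ^ (-(1 + β₂))))⁻¹ := by
  set c := κ - δ * E 0 ^ (-(1 + β₂)) with hc
  have hcE : ContinuousOn E (Set.Icc 0 T) := fun t ht => (hE t ht).continuousWithinAt
  have hpos : ∀ t ∈ Set.Icc (0:ℝ) T, 0 < E t := fun t ht => lt_of_lt_of_le hE0 (hEmono t ht)
  have hcont : ContinuousOn (fun s => g s * Real.exp (β₂ * a * s)) (Set.Icc 0 T) :=
    hg.mul (by fun_prop)
  have key := intervalIntegral.sub_le_integral_of_hasDeriv_right_of_le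
    (g := fun t => E t ^ (-β₂) * Real.exp (β₂ * a * t))
    (g' := fun t => (E' t * (-β₂) * E t ^ (-β₂ - 1)) * Real.exp (β₂ * a * t)
      + E t ^ (-β₂) * (Real.exp (β₂ * a * t) * (β₂ * a)))
    (φ := fun s => (-(β₂ * c)) * (g s * Real.exp (β₂ * a * s))) hT.le
    (by
      apply ContinuousOn.mul
      · exact hcE.rpow_const (fun t ht => Or.inl (hpos t ht).ne')
      · fun_prop)
    (by
      intro t ht
      have ht' := Set.Ioo_subset_Icc_self ht
      have h1 : HasDerivAt E (E' t) t := (hE t ht').hasDerivAt (Icc_mem_nhds ht.1 ht.2)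
      have h2 := h1.rpow_const (p := -β₂) (Or.inl (hpos t ht').ne')
      have h3 : HasDerivAt (fun t : ℝ => Real.exp (β₂ * a * t))
          (Real.exp (β₂ * a * t) * (β₂ * a)) t := by
        simpa using ((hasDerivAt_id t).const_mul (β₂ * a)).exp
      exact (h2.mul h3).hasDerivWithinAt)
    ((hcont.const_mul _).integrableOn_Icc)
    (by
      intro t ht
      have ht' := Set.Ioo_subset_Icc_self ht
      have hp := hpos t ht'
      have hi := hineq t ht'
      have hgt := hgpos t ht'
      have e1 : E t ^ (1 + β₂) * E t ^ (-β₂ - 1) = 1 := by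
        rw [← Real.rpow_add hp]; ring_nf; exact Real.rpow_zero _
      have e2 : E t ^ (-β₂) = E t * E t ^ (-β₂ - 1) := by
        rw [Real.rpow_sub_one hp.ne']; field_simp
      have e3 : E t ^ (-β₂ - 1) ≤ E 0 ^ (-(1 + β₂)) := by
        rw [show -(1 + β₂) = -β₂ - 1 by ring]
        exact Real.rpow_le_rpow_of_nonpos hE0 (hEmono t ht') (by linarith)
      have hP : 0 < E t ^ (-β₂ - 1) := Real.rpow_pos_of_pos hp _
      have hX := Real.exp_pos (β₂ * a * t)
      rw [e2]
      set P := E t ^ (-β₂ - 1)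
      have h5 := mul_le_mul_of_nonneg_right hi hP.le
      have h6 : g t * (κ - δ * P) ≤ E' t * P - a * E t * P := by
        have : (a * E t + g t * (κ * E t ^ (1 + β₂) - δ)) * P
          = a * E t * P + g t * (κ * (E t ^ (1 + β₂) * P) - δ * P) := by ring
        rw [this, e1] at h5
        linarith
      have h7 : g t * c ≤ g t * (κ - δ * P) := by
        apply mul_le_mul_of_nonneg_left _ hgt.le
        have := mul_le_mul_of_nonneg_left e3 hδ
        linarith
      have h8 := mul_le_mul_of_nonneg_left (h7.trans h6) (mul_pos hβ₂ hX).le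
      linarith)
  rw [intervalIntegral.integral_const_mul] at key
  simp only [mul_zero, Real.exp_zero, mul_one] at key
  have hFT : 0 < E T ^ (-β₂) * Real.exp (β₂ * a * T) :=
    mul_pos (Real.rpow_pos_of_pos (hpos T ⟨hT.le, le_rfl⟩) _) (Real.exp_pos _)
  have hB : 0 < E 0 ^ β₂ := Real.rpow_pos_of_pos hE0 _
  rw [Real.rpow_neg hE0.le] at key
  set I := ∫ s in (0:ℝ)..T, g s * Real.exp (β₂ * a * s)
  have h9 : β₂ * c * I < (E 0 ^ β₂)⁻¹ := by linarith
  rw [← one_div, lt_div_iff₀ (by positivity)]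
  rw [← one_div, lt_div_iff₀ hB] at h9
  linarith
end

section
/- Let β₁ > β₂ > 0, set D₁ = ((β₁−β₂)/(1+β₁))·((1+β₁)/(1+β₂))^((1+β₂)/(β₁−β₂)), and let a ∈ ℝ, T > 0, g : [0,T] → (0,∞) continuous, and h₁, h₂ : [0,T] → [0,∞) differentiable with h₁′(t) ≥ a·h₁(t) + g(t)·h₂(t)^(1+β₁) and h₂′(t) ≥ a·h₂(t) + g(t)·h₁(t)^(1+β₂) for all t ∈ [0,T]. Write E = h₁ + h₂ and suppose E(0) > 0, E(t) ≥ E(0) for all t ∈ [0,T], and that ε₀ satisfies 0 < ε₀ ≤ min{1, (h₂(0)/D₁^(1/(1+β₂)))^(β₁−β₂)} and 2^(−(1+β₂))·ε₀·E(0)^(1+β₂) > ε₀^((1+β₁)/(β₁−β₂))·D₁. Then ∫₀ᵀ g(s)·e^(β₂as) ds < [ β₂·E(0)^(β₂)·( ε₀·2^(−(1+β₂)) − ε₀^((1+β₁)/(β₁−β₂))·D₁·E(0)^(−(1+β₂)) ) ]^(−1). -/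
theorem aux_young (β₁ β₂ ε₀ D₁ x : ℝ) (hβ₂ : 0 < β₂) (hβ : β₂ < β₁)
    (hD₁ : D₁ = ((β₁ - β₂) / (1 + β₁)) *
      ((1 + β₁) / (1 + β₂)) ^ ((1 + β₂) / (β₁ - β₂)))
    (hε : 0 < ε₀) (hx : 0 ≤ x) :
    ε₀ * x ^ (1 + β₂) ≤ x ^ (1 + β₁) + ε₀ ^ ((1 + β₁) / (β₁ - β₂)) * D₁ := by
  have hq : 0 < 1 + β₂ := by linarith
  have hp : 0 < 1 + β₁ := by linarith
  have hpq : 0 < β₁ - β₂ := by linarith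
  have hc : ((1 + β₁) / (1 + β₂)).HolderConjugate ((1 + β₁) / (β₁ - β₂)) := by
    rw [Real.holderConjugate_iff]
    refine ⟨by rw [lt_div_iff₀ hq]; linarith, ?_⟩
    field_simp
    ring
  have hY := Real.young_inequality_of_nonneg (Real.rpow_nonneg hx (1 + β₂)) hε.le hc
  rw [← Real.rpow_mul hx, mul_div_cancel₀ _ hq.ne'] at hY
  have h1 : x ^ (1 + β₁) / ((1 + β₁) / (1 + β₂)) ≤ x ^ (1 + β₁) :=
    div_le_self (Real.rpow_nonneg hx _) (by rw [le_div_iff₀ hq]; linarith)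
  have h2 : (β₁ - β₂) / (1 + β₁) ≤ D₁ := by
    rw [hD₁]
    refine le_mul_of_one_le_right (by positivity) ?_
    exact Real.one_le_rpow (by rw [le_div_iff₀ hq]; linarith) (by positivity)
  have h3 : ε₀ ^ ((1 + β₁) / (β₁ - β₂)) / ((1 + β₁) / (β₁ - β₂))
      ≤ ε₀ ^ ((1 + β₁) / (β₁ - β₂)) * D₁ := by
    rw [div_eq_mul_inv, inv_div]
    exact mul_le_mul_of_nonneg_left h2 (Real.rpow_nonneg hε.le _)
  linarith

theorem aux_conv (q x y : ℝ) (hq : 0 < q) (hx : 0 ≤ x) (hy : 0 ≤ y) :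
    (2:ℝ) ^ (-q) * (x + y) ^ q ≤ x ^ q + y ^ q := by
  wlog h : x ≤ y generalizing x y
  · have := this y x hy hx (by linarith)
    rw [add_comm x y]
    linarith
  have h1 : (x + y) ^ q ≤ 2 ^ q * y ^ q := by
    rw [← Real.mul_rpow (by norm_num) hy]
    exact Real.rpow_le_rpow (by linarith) (by linarith) hq.le
  have h2 : (0:ℝ) < 2 ^ q := by positivity
  rw [Real.rpow_neg (by norm_num), inv_mul_le_iff₀ h2]
  have := mul_nonneg h2.le (Real.rpow_nonneg hx q)
  linarith

/-- Pathwise form of Case 2 of Theorem 4.1 for the system of differential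
inequalities with unequal nonlinearity exponents `β₁ > β₂`: the exponential
functional `∫₀ᵀ g(s)·e^(β₂as) ds` stays strictly below the threshold defining
the upper blow-up bound `τ₂*`. -/
theorem stmt7 (β₁ β₂ a T ε₀ D₁ : ℝ) (hβ₂ : 0 < β₂) (hβ : β₂ < β₁) (hT : 0 < T)
    (hD₁ : D₁ = ((β₁ - β₂) / (1 + β₁)) *
      ((1 + β₁) / (1 + β₂)) ^ ((1 + β₂) / (β₁ - β₂)))
    (g h₁ h₂ h₁' h₂' : ℝ → ℝ)
    (hg : ContinuousOn g (Set.Icc 0 T))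
    (hgpos : ∀ t ∈ Set.Icc (0:ℝ) T, 0 < g t)
    (hh₁0 : ∀ t ∈ Set.Icc (0:ℝ) T, 0 ≤ h₁ t)
    (hh₂0 : ∀ t ∈ Set.Icc (0:ℝ) T, 0 ≤ h₂ t)
    (hd₁ : ∀ t ∈ Set.Icc (0:ℝ) T, HasDerivWithinAt h₁ (h₁' t) (Set.Icc 0 T) t)
    (hd₂ : ∀ t ∈ Set.Icc (0:ℝ) T, HasDerivWithinAt h₂ (h₂' t) (Set.Icc 0 T) t)
    (hi₁ : ∀ t ∈ Set.Icc (0:ℝ) T, a * h₁ t + g t * h₂ t ^ (1 + β₁) ≤ h₁' t)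
    (hi₂ : ∀ t ∈ Set.Icc (0:ℝ) T, a * h₂ t + g t * h₁ t ^ (1 + β₂) ≤ h₂' t)
    (hE0 : 0 < h₁ 0 + h₂ 0)
    (hEmono : ∀ t ∈ Set.Icc (0:ℝ) T, h₁ 0 + h₂ 0 ≤ h₁ t + h₂ t)
    (hε₀pos : 0 < ε₀)
    (hε₀ : ε₀ ≤ min 1 ((h₂ 0 / D₁ ^ (1 / (1 + β₂))) ^ (β₁ - β₂)))
    (hcond : ε₀ ^ ((1 + β₁) / (β₁ - β₂)) * D₁
      < (2:ℝ) ^ (-(1 + β₂)) * ε₀ * (h₁ 0 + h₂ 0) ^ (1 + β₂)) :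
    ∫ s in (0:ℝ)..T, g s * Real.exp (β₂ * a * s)
      < (β₂ * (h₁ 0 + h₂ 0) ^ β₂ *
          (ε₀ * (2:ℝ) ^ (-(1 + β₂)) -
            ε₀ ^ ((1 + β₁) / (β₁ - β₂)) * D₁ * (h₁ 0 + h₂ 0) ^ (-(1 + β₂))))⁻¹ := by
  set E0 := h₁ 0 + h₂ 0 with hE0def
  set K := ε₀ ^ ((1 + β₁) / (β₁ - β₂)) * D₁ with hK
  have hε1 : ε₀ ≤ 1 := hε₀.trans (min_le_left _ _)
  have hq : 0 < 1 + β₂ := by linarith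
  have hpq : 0 < β₁ - β₂ := by linarith
  have hp : 0 < 1 + β₁ := by linarith
  have hD0 : 0 ≤ D₁ := by rw [hD₁]; positivity
  have hK0 : 0 ≤ K := by positivity
  have hE0q : 0 < E0 ^ (1 + β₂) := Real.rpow_pos_of_pos hE0 _
  set C := ε₀ * (2:ℝ) ^ (-(1 + β₂)) - K * E0 ^ (-(1 + β₂)) with hC
  have hC0 : 0 < C := by
    rw [hC, Real.rpow_neg hE0.le, ← div_eq_mul_inv, sub_pos, div_lt_iff₀ hE0q]
    linarith
  have hEpos : ∀ t ∈ Set.Icc (0:ℝ) T, 0 < h₁ t + h₂ t := fun t ht =>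
    hE0.trans_le (hEmono t ht)
  have hmain : ∀ t ∈ Set.Icc (0:ℝ) T,
      g t * (C * (h₁ t + h₂ t) ^ (1 + β₂)) ≤ h₁' t + h₂' t - a * (h₁ t + h₂ t) := by
    intro t ht
    have y1 := aux_young β₁ β₂ ε₀ D₁ (h₂ t) hβ₂ hβ hD₁ hε₀pos (hh₂0 t ht)
    have y2 := aux_conv (1 + β₂) (h₁ t) (h₂ t) hq (hh₁0 t ht) (hh₂0 t ht)
    have y3 : K ≤ K * E0 ^ (-(1 + β₂)) * (h₁ t + h₂ t) ^ (1 + β₂) := by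
      rw [mul_assoc]
      refine le_mul_of_one_le_right hK0 ?_
      rw [Real.rpow_neg hE0.le, ← div_eq_inv_mul, le_div_iff₀ hE0q, one_mul]
      exact Real.rpow_le_rpow hE0.le (hEmono t ht) hq.le
    have y4 : ε₀ * h₁ t ^ (1 + β₂) ≤ h₁ t ^ (1 + β₂) :=
      mul_le_of_le_one_left (Real.rpow_nonneg (hh₁0 t ht) _) hε1
    have y5 := mul_le_mul_of_nonneg_left y2 hε₀pos.le
    have y6 : C * (h₁ t + h₂ t) ^ (1 + β₂) ≤ h₂ t ^ (1 + β₁) + h₁ t ^ (1 + β₂) := by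
      rw [hC, sub_mul]
      linarith
    have y7 := mul_le_mul_of_nonneg_left y6 (hgpos t ht).le
    have := hi₁ t ht
    have := hi₂ t ht
    linarith
  have hder : ∀ t ∈ Set.Icc (0:ℝ) T, HasDerivWithinAt
      (fun t => -((h₁ t + h₂ t) ^ (-β₂) * Real.exp (β₂ * a * t)))
      (-(((h₁' t + h₂' t) * (-β₂) * (h₁ t + h₂ t) ^ (-β₂ - 1)) * Real.exp (β₂ * a * t)
        + (h₁ t + h₂ t) ^ (-β₂) * (Real.exp (β₂ * a * t) * (β₂ * a)))) (Set.Icc 0 T) t := by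
    intro t ht
    have e1 := ((hd₁ t ht).add (hd₂ t ht)).rpow_const (p := -β₂) (Or.inl (hEpos t ht).ne')
    have e2 : HasDerivAt (fun t : ℝ => Real.exp (β₂ * a * t))
        (Real.exp (β₂ * a * t) * (β₂ * a)) t := by
      simpa using ((hasDerivAt_id t).const_mul (β₂ * a)).exp
    exact (e1.mul e2.hasDerivWithinAt).neg
  have hcont : ContinuousOn (fun s => g s * Real.exp (β₂ * a * s)) (Set.Icc 0 T) :=
    hg.mul (by fun_prop)
  have hint := intervalIntegral.integral_le_sub_of_hasDeriv_right_of_le hT.le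
    (fun t ht => (hder t ht).continuousWithinAt)
    (fun t ht => ((hder t (Set.Ioo_subset_Icc_self ht)).hasDerivAt
      (Icc_mem_nhds ht.1 ht.2)).hasDerivWithinAt)
    (φ := fun s => (β₂ * C) * (g s * Real.exp (β₂ * a * s)))
    (hcont.const_mul _).integrableOn_Icc
    (by
      intro t ht
      have ht' := Set.Ioo_subset_Icc_self ht
      have hE := hEpos t ht'
      have m := hmain t ht'
      have r1 : (h₁ t + h₂ t) ^ (-β₂) = (h₁ t + h₂ t) ^ (-β₂ - 1) * (h₁ t + h₂ t) := by
        rw [← Real.rpow_add_one hE.ne']; congr 1; ring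
      have r2 : (h₁ t + h₂ t) ^ (1 + β₂) * (h₁ t + h₂ t) ^ (-β₂ - 1) = 1 := by
        rw [← Real.rpow_add hE]
        have : 1 + β₂ + (-β₂ - 1) = 0 := by ring
        rw [this, Real.rpow_zero]
      have hw : 0 ≤ β₂ * Real.exp (β₂ * a * t) * (h₁ t + h₂ t) ^ (-β₂ - 1) := by positivity
      have m2 := mul_le_mul_of_nonneg_left m hw
      rw [r1]
      calc β₂ * C * (g t * Real.exp (β₂ * a * t))
          = β₂ * C * (g t * Real.exp (β₂ * a * t)) *
            ((h₁ t + h₂ t) ^ (1 + β₂) * (h₁ t + h₂ t) ^ (-β₂ - 1)) := by rw [r2, mul_one]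
        _ = β₂ * Real.exp (β₂ * a * t) * (h₁ t + h₂ t) ^ (-β₂ - 1) *
            (g t * (C * (h₁ t + h₂ t) ^ (1 + β₂))) := by ring
        _ ≤ _ := m2
        _ = _ := by ring)
  rw [intervalIntegral.integral_const_mul] at hint
  have hTpos : 0 < (h₁ T + h₂ T) ^ (-β₂) * Real.exp (β₂ * a * T) :=
    mul_pos (Real.rpow_pos_of_pos (hEpos T ⟨hT.le, le_rfl⟩) _) (Real.exp_pos _)
  simp only [mul_zero, Real.exp_zero, mul_one] at hint
  rw [← hE0def] at hint
  have hE0b : 0 < E0 ^ β₂ := Real.rpow_pos_of_pos hE0 _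
  have hlt : β₂ * C * ∫ s in (0:ℝ)..T, g s * Real.exp (β₂ * a * s) < (E0 ^ β₂)⁻¹ := by
    rw [← Real.rpow_neg hE0.le]
    linarith
  rw [← one_div, lt_div_iff₀ (by positivity)]
  rw [← one_div, lt_div_iff₀ hE0b] at hlt
  linarith
end

section
/- Let 1/2 < H < α, let ρ₁, ρ₂ ∈ ℝ, and let L > 0. Then sup_{t ≥ 0} (2ρ₁²·t + 2ρ₂²·t^(2H))/(L + t^α)² ≤ (ρ₁²·(2α−1)^(2−1/α)/α²)·L^(1/α−2) + 2ρ₂²·((α−H)/α)^(2−2H/α)·L^(2H/α−2). -/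
theorem aux12 (θ u L : ℝ) (h0 : 0 < θ) (h1 : θ < 1) (hu : 0 ≤ u) (hL : 0 < L) :
    u ^ (2 * θ) / (L + u) ^ 2 ≤ θ ^ (2 * θ) * (1 - θ) ^ (2 - 2 * θ) * L ^ (2 * θ - 2) := by
  have h1' : 0 < 1 - θ := by linarith
  have key := Real.geom_mean_le_arith_mean2_weighted h0.le h1'.le
    (div_nonneg hu h0.le) (div_nonneg hL.le h1'.le) (by ring)
  rw [Real.div_rpow hu h0.le, Real.div_rpow hL.le h1'.le, mul_div_cancel₀ _ h0.ne',
    mul_div_cancel₀ _ h1'.ne', div_mul_div_comm] at key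
  have e1 : u ^ (2 * θ) = (u ^ θ) ^ 2 := by
    rw [mul_comm, Real.rpow_mul hu]; norm_num
  have e2 : θ ^ (2 * θ) = (θ ^ θ) ^ 2 := by
    rw [mul_comm, Real.rpow_mul h0.le]; norm_num
  have e3 : (1 - θ) ^ (2 - 2 * θ) = ((1 - θ) ^ (1 - θ)) ^ 2 := by
    rw [show 2 - 2 * θ = (1 - θ) * 2 by ring, Real.rpow_mul h1'.le]; norm_num
  have e4 : L ^ (2 * θ - 2) = ((L ^ (1 - θ)) ^ 2)⁻¹ := by
    rw [show 2 * θ - 2 = -((1 - θ) * 2) by ring, Real.rpow_neg hL.le, Real.rpow_mul hL.le]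
    norm_num
  rw [e1, e2, e3, e4]
  have hA : 0 < θ ^ θ := Real.rpow_pos_of_pos h0 _
  have hB : 0 < (1 - θ) ^ (1 - θ) := Real.rpow_pos_of_pos h1' _
  have hC : 0 < L ^ (1 - θ) := Real.rpow_pos_of_pos hL _
  have hD : 0 ≤ u ^ θ := Real.rpow_nonneg hu _
  generalize θ ^ θ = A at *
  generalize (1 - θ) ^ (1 - θ) = B at *
  generalize L ^ (1 - θ) = C at *
  generalize u ^ θ = D at *
  rw [div_le_iff₀ (by positivity)] at key
  rw [← div_eq_mul_inv, div_le_div_iff₀ (by positivity) (by positivity)]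
  have := pow_le_pow_left₀ (by positivity) key 2
  linarith [this, show (D * C) ^ 2 = D ^ 2 * C ^ 2 by ring,
    show ((u + L) * (A * B)) ^ 2 = A ^ 2 * B ^ 2 * (L + u) ^ 2 by ring]

/-- Explicit bound on `M_x = sup_{t≥0} (2ρ₁²t+2ρ₂²t^(2H))/(L+t^α)²` from the
proof of Theorem 6.5, for `1/2 < H < α` and `L > 0`. -/
theorem stmt12 (H α ρ₁ ρ₂ L : ℝ) (hH : 1 / 2 < H) (hHα : H < α) (hL : 0 < L) :
    ∀ t : ℝ, 0 ≤ t →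
      (2 * ρ₁ ^ 2 * t + 2 * ρ₂ ^ 2 * t ^ (2 * H)) / (L + t ^ α) ^ 2
        ≤ ρ₁ ^ 2 * (2 * α - 1) ^ (2 - 1 / α) / α ^ 2 * L ^ (1 / α - 2)
          + 2 * ρ₂ ^ 2 * ((α - H) / α) ^ (2 - 2 * H / α) * L ^ (2 * H / α - 2) := by
  intro t ht
  have hα : 0 < α := by linarith
  have hu : 0 ≤ t ^ α := Real.rpow_nonneg ht _
  have k1 := aux12 (1 / (2 * α)) (t ^ α) L (by positivity)
    (by rw [div_lt_one (by positivity)]; linarith) hu hL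
  have k2 := aux12 (H / α) (t ^ α) L (div_pos (by linarith) hα)
    (by rw [div_lt_one hα]; exact hHα) hu hL
  rw [← Real.rpow_mul ht] at k1 k2
  rw [show α * (2 * (1 / (2 * α))) = 1 by field_simp, Real.rpow_one,
    show 2 * (1 / (2 * α)) = 1 / α by field_simp,
    show 1 - 1 / (2 * α) = (2 * α - 1) / (2 * α) by field_simp,
    Real.div_rpow (by norm_num) (by positivity), Real.div_rpow (by linarith) (by positivity),
    Real.one_rpow, div_mul_div_comm, one_mul, ← Real.rpow_add (by positivity),
    show 1 / α + (2 - 1 / α) = 2 by ring, Real.rpow_two] at k1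
  rw [show α * (2 * (H / α)) = 2 * H by field_simp,
    show 2 * (H / α) = 2 * H / α by ring,
    show 1 - H / α = (α - H) / α by field_simp] at k2
  have hP : 0 ≤ (2 * α - 1) ^ (2 - 1 / α) := Real.rpow_nonneg (by linarith) _
  have hQ : 0 ≤ ((α - H) / α) ^ (2 - 2 * H / α) :=
    Real.rpow_nonneg (div_nonneg (by linarith) hα.le) _
  have hR : 0 ≤ L ^ (1 / α - 2) := Real.rpow_nonneg hL.le _
  have hS : 0 ≤ L ^ (2 * H / α - 2) := Real.rpow_nonneg hL.le _
  have hT : (H / α) ^ (2 * H / α) ≤ 1 :=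
    Real.rpow_le_one (div_nonneg (by linarith) hα.le) ((div_le_one hα).2 hHα.le)
      (div_nonneg (by linarith) hα.le)
  have k2' : t ^ (2 * H) / (L + t ^ α) ^ 2 ≤
      ((α - H) / α) ^ (2 - 2 * H / α) * L ^ (2 * H / α - 2) := by
    refine k2.trans ?_
    rw [mul_assoc]
    exact mul_le_of_le_one_left (mul_nonneg hQ hS) hT
  have k1' : 2 * (t / (L + t ^ α) ^ 2) ≤
      (2 * α - 1) ^ (2 - 1 / α) / α ^ 2 * L ^ (1 / α - 2) := by
    have e : (2 * α - 1) ^ (2 - 1 / α) / (2 * α) ^ 2 * L ^ (1 / α - 2) =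
      ((2 * α - 1) ^ (2 - 1 / α) / α ^ 2 * L ^ (1 / α - 2)) / 4 := by
      field_simp; ring
    have : 0 ≤ (2 * α - 1) ^ (2 - 1 / α) / α ^ 2 * L ^ (1 / α - 2) := by positivity
    rw [e] at k1
    linarith
  have a1 := mul_le_mul_of_nonneg_left k1' (sq_nonneg ρ₁)
  have a2 := mul_le_mul_of_nonneg_left k2' (show 0 ≤ 2 * ρ₂ ^ 2 by positivity)
  calc _ = ρ₁ ^ 2 * (2 * (t / (L + t ^ α) ^ 2))
        + 2 * ρ₂ ^ 2 * (t ^ (2 * H) / (L + t ^ α) ^ 2) := by ring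
    _ ≤ _ := add_le_add a1 a2
    _ = _ := by ring
end

section
/- Let c₁, c₂ ∈ ℝ, β > 0, T > 0, let g₁, g₂ : [0,T] → (0,∞) be continuous, and let h₁, h₂ : [0,T] → [0,∞) be differentiable with h₁(0)+h₂(0) > 0 and with h₁′(t) ≥ c₁·h₁(t) + g₁(t)·h₂(t)^(1+β) and h₂′(t) ≥ c₂·h₂(t) + g₂(t)·h₁(t)^(1+β) for all t ∈ [0,T]. Then, with a = min(c₁,c₂), one has 2^(−β)·β·∫₀ᵀ min(g₁(s),g₂(s))·e^(βas) ds < (h₁(0)+h₂(0))^(−β). -/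
/-- Pathwise content of Case 1 of Theorem 5.2 (upper bound `τ₁**` in the
general case, `β₁ = β₂ = β`, with two different exponential weights): if
`h₁' ≥ c₁·h₁ + g₁·h₂^(1+β)` and `h₂' ≥ c₂·h₂ + g₂·h₁^(1+β)` on `[0,T]` with
`h₁(0)+h₂(0) > 0`, then, with `a = min(c₁,c₂)`,
`2^(−β)·β·∫₀ᵀ min(g₁,g₂)(s)·e^(βas) ds < (h₁(0)+h₂(0))^(−β)`. -/
theorem stmt15 (c₁ c₂ β T : ℝ) (hβ : 0 < β) (hT : 0 < T)
    (g₁ g₂ h₁ h₂ h₁' h₂' : ℝ → ℝ)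
    (hg₁ : ContinuousOn g₁ (Set.Icc 0 T)) (hg₂ : ContinuousOn g₂ (Set.Icc 0 T))
    (hg₁pos : ∀ t ∈ Set.Icc (0:ℝ) T, 0 < g₁ t)
    (hg₂pos : ∀ t ∈ Set.Icc (0:ℝ) T, 0 < g₂ t)
    (hh₁0 : ∀ t ∈ Set.Icc (0:ℝ) T, 0 ≤ h₁ t)
    (hh₂0 : ∀ t ∈ Set.Icc (0:ℝ) T, 0 ≤ h₂ t)
    (hinit : 0 < h₁ 0 + h₂ 0)
    (hd₁ : ∀ t ∈ Set.Icc (0:ℝ) T, HasDerivWithinAt h₁ (h₁' t) (Set.Icc 0 T) t)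
    (hd₂ : ∀ t ∈ Set.Icc (0:ℝ) T, HasDerivWithinAt h₂ (h₂' t) (Set.Icc 0 T) t)
    (hi₁ : ∀ t ∈ Set.Icc (0:ℝ) T, c₁ * h₁ t + g₁ t * h₂ t ^ (1 + β) ≤ h₁' t)
    (hi₂ : ∀ t ∈ Set.Icc (0:ℝ) T, c₂ * h₂ t + g₂ t * h₁ t ^ (1 + β) ≤ h₂' t) :
    (2:ℝ) ^ (-β) * β *
        ∫ s in (0:ℝ)..T, min (g₁ s) (g₂ s) * Real.exp (β * min c₁ c₂ * s)
      < (h₁ 0 + h₂ 0) ^ (-β) := by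
  set a := min c₁ c₂ with ha
  set G : ℝ → ℝ := fun s => min (g₁ s) (g₂ s) * Real.exp (β * a * s) with hG
  set u : ℝ → ℝ := fun t => Real.exp (-a * t) * (h₁ t + h₂ t) with hu
  set u' : ℝ → ℝ := fun t => Real.exp (-a * t) * (-a) * (h₁ t + h₂ t)
    + Real.exp (-a * t) * (h₁' t + h₂' t) with hu'
  have hdu : ∀ t ∈ Set.Icc (0:ℝ) T, HasDerivWithinAt u (u' t) (Set.Icc 0 T) t := by
    intro t ht
    have he : HasDerivAt (fun t => Real.exp (-a * t)) (Real.exp (-a * t) * (-a)) t := by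
      have := ((hasDerivAt_id t).const_mul (-a)).exp
      simpa using this
    exact he.hasDerivWithinAt.mul ((hd₁ t ht).add (hd₂ t ht))
  have hu0 : ∀ t ∈ Set.Icc (0:ℝ) T, 0 ≤ u t := fun t ht =>
    mul_nonneg (Real.exp_pos _).le (add_nonneg (hh₁0 t ht) (hh₂0 t ht))
  have hGpos : ∀ t ∈ Set.Icc (0:ℝ) T, 0 < G t := fun t ht =>
    mul_pos (lt_min (hg₁pos t ht) (hg₂pos t ht)) (Real.exp_pos _)
  have hkey : ∀ t ∈ Set.Icc (0:ℝ) T, (2:ℝ) ^ (-β) * G t * u t ^ (1 + β) ≤ u' t := by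
    intro t ht
    have A := hh₁0 t ht
    have B := hh₂0 t ht
    have hconv : (2:ℝ) ^ (-β) * (h₁ t + h₂ t) ^ (1 + β) ≤ h₁ t ^ (1+β) + h₂ t ^ (1+β) := by
      have := NNReal.coe_le_coe.2 (NNReal.rpow_add_le_mul_rpow_add_rpow (h₁ t).toNNReal (h₂ t).toNNReal
        (show 1 ≤ 1 + β by linarith))
      push_cast at this
      rw [Real.coe_toNNReal _ A, Real.coe_toNNReal _ B] at this
      rw [Real.rpow_neg (by norm_num), inv_mul_le_iff₀ (by positivity)]
      simpa using this
    have hm := (lt_min (hg₁pos t ht) (hg₂pos t ht)).le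
    have h3 : min (g₁ t) (g₂ t) * (h₁ t ^ (1+β) + h₂ t ^ (1+β)) ≤
        g₂ t * h₁ t ^ (1+β) + g₁ t * h₂ t ^ (1+β) := by
      have i1 := mul_le_mul_of_nonneg_right (min_le_right (g₁ t) (g₂ t)) (Real.rpow_nonneg A (1+β))
      have i2 := mul_le_mul_of_nonneg_right (min_le_left (g₁ t) (g₂ t)) (Real.rpow_nonneg B (1+β))
      linarith
    have h4 := mul_le_mul_of_nonneg_left hconv hm
    have h5 : a * h₁ t ≤ c₁ * h₁ t := mul_le_mul_of_nonneg_right (min_le_left _ _) A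
    have h6 : a * h₂ t ≤ c₂ * h₂ t := mul_le_mul_of_nonneg_right (min_le_right _ _) B
    have h7 : min (g₁ t) (g₂ t) * ((2:ℝ) ^ (-β) * (h₁ t + h₂ t) ^ (1 + β)) ≤
        -a * (h₁ t + h₂ t) + (h₁' t + h₂' t) := by
      have := hi₁ t ht
      have := hi₂ t ht
      linarith
    have h8 := mul_le_mul_of_nonneg_left h7 (Real.exp_pos (-a * t)).le
    have h9 : Real.exp (β * a * t) * Real.exp (-a * t) ^ (1 + β) = Real.exp (-a * t) := by
      rw [← Real.exp_mul, ← Real.exp_add]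
      congr 1
      ring
    have h10 : (2:ℝ) ^ (-β) * G t * u t ^ (1 + β) = Real.exp (-a * t) *
        (min (g₁ t) (g₂ t) * ((2:ℝ) ^ (-β) * (h₁ t + h₂ t) ^ (1 + β))) := by
      simp only [hG, hu]
      rw [Real.mul_rpow (Real.exp_pos _).le (add_nonneg A B)]
      linear_combination ((2:ℝ) ^ (-β) * min (g₁ t) (g₂ t) * (h₁ t + h₂ t) ^ (1 + β)) * h9
    rw [h10]
    refine h8.trans (le_of_eq ?_)
    simp only [hu']
    ring
  have huc : ContinuousOn u (Set.Icc 0 T) := fun t ht => (hdu t ht).continuousWithinAt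
  have hmono : MonotoneOn u (Set.Icc 0 T) := by
    apply monotoneOn_of_hasDerivWithinAt_nonneg (convex_Icc _ _) huc (f' := u')
    · intro x hx
      exact (hdu x (interior_subset hx)).mono interior_subset
    · intro x hx
      have hx := interior_subset hx
      refine le_trans ?_ (hkey x hx)
      have := hGpos x hx
      have := Real.rpow_nonneg (hu0 x hx) (1+β)
      positivity
  have hz : (0:ℝ) ∈ Set.Icc 0 T := ⟨le_rfl, hT.le⟩
  have hTT : T ∈ Set.Icc 0 T := ⟨hT.le, le_rfl⟩
  have hu00 : u 0 = h₁ 0 + h₂ 0 := by simp [hu]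
  have hupos : ∀ t ∈ Set.Icc (0:ℝ) T, 0 < u t := fun t ht =>
    lt_of_lt_of_le (hu00 ▸ hinit) (hmono hz ht ht.1)
  have hGc : ContinuousOn G (Set.Icc 0 T) :=
    (ContinuousOn.inf hg₁ hg₂).mul (by fun_prop)
  have hmain := intervalIntegral.integral_le_sub_of_hasDeriv_right_of_le (a := 0) (b := T)
    (g := fun t => -(u t ^ (-β))) (g' := fun t => -(u' t * (-β) * u t ^ (-β - 1)))
    (φ := fun t => (2:ℝ) ^ (-β) * β * G t) hT.le
    (huc.rpow_const (fun x hx => Or.inl (hupos x hx).ne')).neg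
    (fun x hx => by
      have hx' := Set.Ioo_subset_Icc_self hx
      have := (((hdu x hx').hasDerivAt (Icc_mem_nhds hx.1 hx.2)).rpow_const (p := -β)
        (Or.inl (hupos x hx').ne')).neg
      exact this.hasDerivWithinAt)
    ((continuousOn_const.mul hGc).integrableOn_Icc)
    (fun x hx => by
      have hx' := Set.Ioo_subset_Icc_self hx
      have p := hupos x hx'
      have q : u x ^ (1 + β) * u x ^ (-β - 1) = 1 := by
        rw [← Real.rpow_add p, show 1 + β + (-β - 1) = 0 by ring, Real.rpow_zero]
      have k := mul_le_mul_of_nonneg_right (hkey x hx')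
        (mul_nonneg hβ.le (Real.rpow_nonneg p.le (-β - 1)))
      have e : (2:ℝ) ^ (-β) * G x * u x ^ (1 + β) * (β * u x ^ (-β - 1)) =
          (2:ℝ) ^ (-β) * β * G x := by
        linear_combination ((2:ℝ) ^ (-β) * β * G x) * q
      rw [e] at k
      refine k.trans (le_of_eq ?_)
      ring)
  rw [intervalIntegral.integral_const_mul] at hmain
  have := Real.rpow_pos_of_pos (hupos T hTT) (-β)
  simp only [hu00] at hmain
  linarith
end

section
/- Let β₁ > β₂ > 0, set D₁ = ((β₁−β₂)/(1+β₁))·((1+β₁)/(1+β₂))^((1+β₂)/(β₁−β₂)), and let ε₀ be a real number with 0 < ε₀ ≤ 1. Then for all real x, y ≥ 0, one has x^(1+β₂) + y^(1+β₁) ≥ 2^(−(1+β₂))·ε₀·(x+y)^(1+β₂) − D₁·ε₀^((1+β₁)/(β₁−β₂)). -/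
/-- Core pointwise estimate in Case 2 of the proof of Theorem 4.1: for
`β₁ > β₂ > 0`, `0 < ε₀ ≤ 1` and `x, y ≥ 0`,
`x^(1+β₂) + y^(1+β₁) ≥ 2^(−(1+β₂))·ε₀·(x+y)^(1+β₂) − D₁·ε₀^((1+β₁)/(β₁−β₂))`. -/
theorem stmt16 (β₁ β₂ ε₀ : ℝ) (hβ₂ : 0 < β₂) (hβ : β₂ < β₁)
    (D₁ : ℝ)
    (hD₁ : D₁ = ((β₁ - β₂) / (1 + β₁)) *
      ((1 + β₁) / (1 + β₂)) ^ ((1 + β₂) / (β₁ - β₂)))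
    (hε₀ : 0 < ε₀) (hε₀1 : ε₀ ≤ 1) :
    ∀ x y : ℝ, 0 ≤ x → 0 ≤ y →
      (2:ℝ) ^ (-(1 + β₂)) * ε₀ * (x + y) ^ (1 + β₂)
          - D₁ * ε₀ ^ ((1 + β₁) / (β₁ - β₂))
        ≤ x ^ (1 + β₂) + y ^ (1 + β₁) := by
  intro x y hx hy
  have hs : 0 < 1 + β₂ := by linarith
  have ht : 0 < 1 + β₁ := by linarith
  have hd : 0 < β₁ - β₂ := by linarith
  have hp1 : 1 < (1 + β₁) / (1 + β₂) := by rw [lt_div_iff₀ hs]; linarith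
  have hpq : ((1 + β₁) / (1 + β₂)).HolderConjugate ((1 + β₁) / (β₁ - β₂)) := by
    rw [Real.holderConjugate_iff]
    refine ⟨hp1, ?_⟩
    field_simp
    ring
  have hY : 0 ≤ y ^ (1 + β₂) := Real.rpow_nonneg hy _
  have hX : 0 ≤ x ^ (1 + β₂) := Real.rpow_nonneg hx _
  have hyoung := Real.young_inequality_of_nonneg hY hε₀.le hpq
  have hpow : (y ^ (1 + β₂)) ^ ((1 + β₁) / (1 + β₂)) = y ^ (1 + β₁) := by
    rw [← Real.rpow_mul hy]
    congr 1
    field_simp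
  rw [hpow] at hyoung
  have hZ : 0 ≤ y ^ (1 + β₁) := Real.rpow_nonneg hy _
  have h1 : y ^ (1 + β₁) / ((1 + β₁) / (1 + β₂)) ≤ y ^ (1 + β₁) :=
    div_le_self hZ hp1.le
  have hE : 0 ≤ ε₀ ^ ((1 + β₁) / (β₁ - β₂)) := Real.rpow_nonneg hε₀.le _
  have hD : (β₁ - β₂) / (1 + β₁) ≤ D₁ := by
    rw [hD₁]
    exact le_mul_of_one_le_right (by positivity)
      (Real.one_le_rpow hp1.le (by positivity))
  have h2 : ε₀ ^ ((1 + β₁) / (β₁ - β₂)) / ((1 + β₁) / (β₁ - β₂))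
      ≤ D₁ * ε₀ ^ ((1 + β₁) / (β₁ - β₂)) := by
    rw [div_eq_mul_inv, inv_div, mul_comm]
    exact mul_le_mul_of_nonneg_right hD hE
  have h3 : (2:ℝ) ^ (-(1 + β₂)) * (x + y) ^ (1 + β₂) ≤ x ^ (1 + β₂) + y ^ (1 + β₂) := by
    have e : (2:ℝ) ^ (-(1 + β₂)) * (x + y) ^ (1 + β₂) = ((x + y) / 2) ^ (1 + β₂) := by
      rw [Real.div_rpow (by positivity) (by norm_num), Real.rpow_neg (by norm_num)]
      ring
    rw [e]
    rcases le_total x y with h | h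
    · have := Real.rpow_le_rpow (by positivity) (by linarith : (x + y) / 2 ≤ y) hs.le
      linarith
    · have := Real.rpow_le_rpow (by positivity) (by linarith : (x + y) / 2 ≤ x) hs.le
      linarith
  have h4 := mul_le_mul_of_nonneg_left h3 hε₀.le
  have h5 : ε₀ * x ^ (1 + β₂) ≤ x ^ (1 + β₂) := mul_le_of_le_one_left hX hε₀1
  nlinarith
end
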